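/- Let b ≥ 4 be an integer and α = (b+√(b²−4))/2, with conjugate α₂ = 1/α. Then: (1) { ξ ∈ ℝ : limsup_{n→∞} ‖ξ·α^n‖ = 0 } equals X₀ := (1/(α−α₂))·ℤ[α]; (2) { ξ ∈ ℝ : limsup_{n→∞} ‖ξ·α^n‖ = 1/(2+b) } equals X₁ := { ±(α−1)/(b²−4) + x : x ∈ X₀ }; (3) for every ξ ∈ ℝ ∖ X₀ one has limsup_{n→∞} ‖ξ·α^n‖ ≥ 1/(2+b); and (4) for every ξ ∈ ℝ ∖ (X₀ ∪ X₁) one has limsup_{n→∞} ‖ξ·α^n‖ ≥ 1/(1+b). -/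

import Mathlib

/-- Distance from `x` to the nearest integer. -/
noncomputable def distNearestInt (x : ℝ) : ℝ := |x - round x|

/-- `limsup_{n→∞} ‖ξ·α^n‖`. -/
noncomputable def limsupDist (α ξ : ℝ) : ℝ :=
  Filter.limsup (fun n : ℕ => distNearestInt (ξ * α ^ n)) Filter.atTop

/-!
Write `β = α₂`, so that `α + β = b` and `α * β = 1`. If `ξ + η` and `ξ * α + η * β` are `c` and `-c`
modulo `1`, where `(b + 2) * c` is an integer, then the recurrence `x (n + 2) = b * x (n + 1) - x n`
gives `ξ * α ^ n + η * β ^ n ≡ (-1) ^ n * c` for every `n`, and `‖ξ * α ^ n‖` tends to `‖c‖` because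
`β ^ n → 0`. The values `c = 0` and `c = ± 1 / (b + 2)` produce `X₀` and `X₁`.

Conversely, let `e n` be the signed distance of `ξ * α ^ n` to the nearest integer. The numbers
`s n = b * e (n + 1) - e n - e (n + 2)` are integers. If eventually `|e n| < 1 / (b + 1)`, then
`|s n| ≤ 1`, and `|b * s n + s (n + 1)| < b` because `e (n + 2)` cancels in that combination. So a
nonzero `s n` forces `s (n + 1) = - s n`, and `s` is eventually `(-1) ^ n * t` with `|t| ≤ 1`. Up to
an alternating term, `e` is then a bounded solution of the homogeneous recurrence, hence a multiple
of `β ^ n`, which returns `ξ * α ^ M`, and by running the recurrence backwards `ξ`, to one of the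
three classes above.
-/

open Filter Topology

section LevelSets

variable {X R : Type*} [LinearOrder R] {f : X → R} {A B : Set X} {a b c : R}

theorem le_of_notMem_of_gap (hbc : b ≤ c) (hB : ∀ x ∈ B, f x = b)
    (hC : ∀ x, x ∉ A ∪ B → c ≤ f x) {x : X} (hx : x ∉ A) : b ≤ f x := by
  by_cases hxB : x ∈ B
  · exact (hB x hxB).ge
  · exact hbc.trans (hC x (by simp [hx, hxB]))

theorem setOf_eq_of_gap_left (hab : a < b) (hbc : b ≤ c) (hA : ∀ x ∈ A, f x = a)
    (hB : ∀ x ∈ B, f x = b) (hC : ∀ x, x ∉ A ∪ B → c ≤ f x) : {x | f x = a} = A := by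
  refine Set.Subset.antisymm (fun x hx ↦ ?_) hA
  by_contra hxA
  exact ((le_of_notMem_of_gap hbc hB hC hxA).trans_eq hx).not_gt hab

theorem setOf_eq_of_gap_right (hab : a ≠ b) (hbc : b < c) (hA : ∀ x ∈ A, f x = a)
    (hB : ∀ x ∈ B, f x = b) (hC : ∀ x, x ∉ A ∪ B → c ≤ f x) : {x | f x = b} = B := by
  refine Set.Subset.antisymm (fun x hx ↦ ?_) hB
  by_contra hxB
  have hxA : x ∉ A := fun h ↦ hab ((hA x h).symm.trans hx)
  exact ((hC x (by simp [hxA, hxB])).trans_eq hx).not_gt hbc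

end LevelSets

theorem mem_adjoin_singleton_iff_of_sq_eq {R A : Type*} [CommSemiring R] [CommSemiring A]
    [Algebra R A] {x : A} {r s : R} (hx : x ^ 2 = algebraMap R A r + algebraMap R A s * x) {y : A} :
    y ∈ Algebra.adjoin R {x} ↔ ∃ p q : R, y = algebraMap R A p + algebraMap R A q * x := by
  constructor
  · intro hy
    induction hy using Algebra.adjoin_induction with
    | mem y hy => exact ⟨0, 1, by simp [Set.mem_singleton_iff.mp hy]⟩
    | algebraMap p => exact ⟨p, 0, by simp⟩
    | add y z _ _ hy hz =>
      obtain ⟨p, q, rfl⟩ := hy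
      obtain ⟨p', q', rfl⟩ := hz
      exact ⟨p + p', q + q', by simp only [map_add]; ring⟩
    | mul y z _ _ hy hz =>
      obtain ⟨p, q, rfl⟩ := hy
      obtain ⟨p', q', rfl⟩ := hz
      refine ⟨p * p' + q * q' * r, p * q' + q * p' + q * q' * s, ?_⟩
      simp only [map_add, map_mul]
      calc (algebraMap R A p + algebraMap R A q * x) * (algebraMap R A p' + algebraMap R A q' * x)
          = algebraMap R A p * algebraMap R A p' + (algebraMap R A p * algebraMap R A q' +
              algebraMap R A q * algebraMap R A p') * x +
              algebraMap R A q * algebraMap R A q' * x ^ 2 := by ring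
        _ = _ := by rw [hx]; ring
  · rintro ⟨p, q, rfl⟩
    exact add_mem (Subalgebra.algebraMap_mem _ p)
      (mul_mem (Subalgebra.algebraMap_mem _ q) (Algebra.self_mem_adjoin_singleton R x))

section BoundedRecurrence

variable {𝕜 : Type*} [NormedField 𝕜] {α β : 𝕜} {C : ℝ}

theorem eq_zero_of_norm_pow_mul_le (hα : 1 < ‖α‖) {y : 𝕜} (hy : ∀ k : ℕ, ‖α ^ k * y‖ ≤ C) :
    y = 0 := by
  by_contra hne
  have hpos : 0 < ‖y‖ := norm_pos_iff.mpr hne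
  obtain ⟨k, hk⟩ := pow_unbounded_of_one_lt (C / ‖y‖) hα
  rw [div_lt_iff₀ hpos, ← norm_pow, ← norm_mul] at hk
  exact (hy k).not_gt hk

theorem eq_mul_of_bounded_of_recurrence (hα : 1 < ‖α‖) {x : ℕ → 𝕜} (hC : ∀ n, ‖x n‖ ≤ C)
    (hx : ∀ n, x (n + 2) = (α + β) * x (n + 1) - α * β * x n) (n : ℕ) : x (n + 1) = β * x n := by
  have expand (k : ℕ) : x (n + k + 1) - β * x (n + k) = α ^ k * (x (n + 1) - β * x n) := by
    induction k with
    | zero => simp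
    | succ k ih =>
      rw [pow_succ', mul_assoc, ← ih, ← add_assoc, hx]
      ring
  refine sub_eq_zero.mp (eq_zero_of_norm_pow_mul_le (C := C + ‖β‖ * C) hα fun k ↦ ?_)
  calc ‖α ^ k * (x (n + 1) - β * x n)‖ = ‖x (n + k + 1) - β * x (n + k)‖ := by rw [expand]
    _ ≤ ‖x (n + k + 1)‖ + ‖β‖ * ‖x (n + k)‖ := by rw [← norm_mul]; exact norm_sub_le _ _
    _ ≤ C + ‖β‖ * C := by gcongr <;> exact hC _

end BoundedRecurrence

theorem exists_alternating_tail {R : Type*} [Ring R] {s : ℕ → R} {N : ℕ}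
    (hs : ∀ n ≥ N, s n ≠ 0 → s (n + 1) = -s n) :
    ∃ M ≥ N, ∀ k, s (M + k) = (-1) ^ k * s M := by
  by_cases hzero : ∀ n ≥ N, s n = 0
  · exact ⟨N, le_rfl, fun k ↦ by simp [hzero (N + k) (by lia), hzero N le_rfl]⟩
  · push Not at hzero
    obtain ⟨M, hMN, hM⟩ := hzero
    refine ⟨M, hMN, fun k ↦ ?_⟩
    induction k with
    | zero => simp
    | succ k ih =>
      have hne : s (M + k) ≠ 0 := by
        rcases neg_one_pow_eq_or R k with h | h <;> simpa [ih, h] using hM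
      rw [← add_assoc, hs _ (by lia) hne, ih, pow_succ', neg_one_mul, neg_mul]

section SmallErrors

variable {b x y z w : ℝ}

theorem abs_defect_lt_two (hb : 0 ≤ b) (hx : |x| < 1 / (b + 1)) (hy : |y| < 1 / (b + 1))
    (hz : |z| < 1 / (b + 1)) : |b * y - x - z| < 2 := by
  have hby : |b * y| ≤ b * (1 / (b + 1)) := by
    rw [abs_mul, abs_of_nonneg hb]
    gcongr
  have hsum : b * (1 / (b + 1)) + 1 / (b + 1) = 1 := by field_simp
  have hle : 1 / (b + 1) ≤ 1 := by rw [div_le_one (by linarith)]; linarith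
  calc |b * y - x - z| ≤ |b * y| + |x| + |z| :=
        (abs_sub _ _).trans (add_le_add_left (abs_sub _ _) _)
    _ < b * (1 / (b + 1)) + 1 / (b + 1) + 1 / (b + 1) := by linarith
    _ ≤ 2 := by linarith

theorem abs_mul_defect_add_defect_lt (hb : 1 ≤ b) (hx : |x| < 1 / (b + 1)) (hy : |y| < 1 / (b + 1))
    (hw : |w| < 1 / (b + 1)) : |b * (b * y - x - z) + (b * z - y - w)| < b := by
  have hby : |(b ^ 2 - 1) * y| ≤ (b ^ 2 - 1) * (1 / (b + 1)) := by
    have : 0 ≤ b ^ 2 - 1 := by nlinarith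
    rw [abs_mul, abs_of_nonneg this]
    gcongr
  have hbx : |b * x| ≤ b * (1 / (b + 1)) := by
    rw [abs_mul, abs_of_pos (by linarith)]
    gcongr
  calc |b * (b * y - x - z) + (b * z - y - w)| = |(b ^ 2 - 1) * y - b * x - w| := by ring_nf
    _ ≤ |(b ^ 2 - 1) * y| + |b * x| + |w| :=
        (abs_sub _ _).trans (add_le_add_left (abs_sub _ _) _)
    _ < (b ^ 2 - 1) * (1 / (b + 1)) + b * (1 / (b + 1)) + 1 / (b + 1) := by linarith
    _ = b := by field_simp; ring

end SmallErrors

theorem eq_neg_of_abs_mul_add_lt {b s t : ℤ} (hs : |s| ≤ 1) (ht : |t| ≤ 1)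
    (hst : |b * s + t| < b) (hs₀ : s ≠ 0) : t = -s := by
  rw [abs_le] at hs ht
  rw [abs_lt] at hst
  obtain rfl | rfl : s = 1 ∨ s = -1 := by lia
  all_goals lia

theorem distNearestInt_eq_norm (x : ℝ) : distNearestInt x = ‖(x : UnitAddCircle)‖ :=
  UnitAddCircle.norm_eq.symm

theorem unitAddCircle_coe_intCast (m : ℤ) : ((m : ℝ) : UnitAddCircle) = 0 :=
  AddCircle.coe_eq_zero_iff (p := (1 : ℝ)).mpr ⟨m, by simp⟩

/-- The pair `(ξ, η)`, with `η` in the role of the conjugate of `ξ`, has trace `ξ + η` equal to `c`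
modulo `1`, and multiplying the pair by `(α, β)` changes the sign of that trace. -/
def IsAlternatingPair (α β : ℝ) (c : UnitAddCircle) (ξ η : ℝ) : Prop :=
  ((ξ + η : ℝ) : UnitAddCircle) = c ∧ ((ξ * α + η * β : ℝ) : UnitAddCircle) = -c

/-- The reals that are the first entry of some alternating pair with trace `c`; the sets `X₀` and
`X₁` of the theorem are made of such classes. -/
def alternatingClass (α β : ℝ) (c : UnitAddCircle) : Set ℝ :=
  {ξ | ∃ η, IsAlternatingPair α β c ξ η}

section AlternatingPair

variable {b : ℤ} {α β ξ η : ℝ} {c : UnitAddCircle}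

theorem IsAlternatingPair.add {ξ' η' : ℝ} {c' : UnitAddCircle}
    (h : IsAlternatingPair α β c ξ η) (h' : IsAlternatingPair α β c' ξ' η') :
    IsAlternatingPair α β (c + c') (ξ + ξ') (η + η') := by
  constructor
  · rw [← h.1, ← h'.1, ← AddCircle.coe_add]
    ring_nf
  · rw [neg_add, ← h.2, ← h'.2, ← AddCircle.coe_add]
    ring_nf

theorem IsAlternatingPair.neg (h : IsAlternatingPair α β c ξ η) :
    IsAlternatingPair α β (-c) (-ξ) (-η) := by
  constructor
  · rw [← h.1, ← AddCircle.coe_neg]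
    ring_nf
  · rw [← h.2, ← AddCircle.coe_neg]
    ring_nf

theorem add_mem_alternatingClass_add_iff {d : UnitAddCircle} {θ θ' : ℝ}
    (hθ : IsAlternatingPair α β d θ θ') :
    θ + ξ ∈ alternatingClass α β (d + c) ↔ ξ ∈ alternatingClass α β c := by
  constructor
  · rintro ⟨η, hη⟩
    have hsub := hθ.neg.add hη
    rw [neg_add_cancel_left, neg_add_cancel_left] at hsub
    exact ⟨_, hsub⟩
  · rintro ⟨η, hη⟩
    exact ⟨_, hθ.add hη⟩

theorem isAlternatingPair_mul_iff (hsum : α + β = b) (hprod : α * β = 1) (hc : (b + 2) • c = 0) :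
    IsAlternatingPair α β (-c) (ξ * α) (η * β) ↔ IsAlternatingPair α β c ξ η := by
  have recurrence : ((ξ * α * α + η * β * β : ℝ) : UnitAddCircle) =
      b • ((ξ * α + η * β : ℝ) : UnitAddCircle) - ((ξ + η : ℝ) : UnitAddCircle) := by
    rw [← AddCircle.coe_zsmul, ← AddCircle.coe_sub, zsmul_eq_mul, ← hsum]
    congr 1
    linear_combination (-(ξ + η)) * hprod
  have hbc : b • c = -c - c := by
    rw [← sub_eq_zero, ← hc]
    module
  unfold IsAlternatingPair
  rw [recurrence, neg_neg, and_comm, and_congr_left_iff]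
  intro hstep
  rw [hstep, smul_neg, hbc, neg_sub, sub_neg_eq_add, add_sub_assoc, add_eq_left, sub_eq_zero,
    eq_comm]

theorem isAlternatingPair_pow_mul_iff (hsum : α + β = b) (hprod : α * β = 1)
    (hc : (b + 2) • c = 0) (n : ℕ) :
    IsAlternatingPair α β ((-1 : ℤ) ^ n • c) (ξ * α ^ n) (η * β ^ n) ↔
      IsAlternatingPair α β c ξ η := by
  induction n with
  | zero => simp
  | succ n ih =>
    have hcn : (b + 2) • ((-1 : ℤ) ^ n • c) = 0 := by rw [smul_comm, hc, smul_zero]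
    rw [← ih, ← isAlternatingPair_mul_iff hsum hprod hcn, pow_succ', neg_one_mul, neg_smul,
      pow_succ, pow_succ, mul_assoc, mul_assoc]

theorem mem_alternatingClass_of_mul_pow_mem (hsum : α + β = b) (hprod : α * β = 1)
    (hc : (b + 2) • c = 0) {n : ℕ} (h : ξ * α ^ n ∈ alternatingClass α β c) :
    ξ ∈ alternatingClass α β ((-1 : ℤ) ^ n • c) := by
  obtain ⟨η, hη⟩ := h
  have hcn : (b + 2) • ((-1 : ℤ) ^ n • c) = 0 := by rw [smul_comm, hc, smul_zero]
  have hβα : η * α ^ n * β ^ n = η := by rw [mul_assoc, ← mul_pow, hprod, one_pow, mul_one]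
  refine ⟨η * α ^ n, (isAlternatingPair_pow_mul_iff hsum hprod hcn n).mp ?_⟩
  rwa [smul_smul, ← mul_pow, neg_one_mul, neg_neg, one_pow, one_smul, hβα]

theorem limsupDist_eq_norm_of_mem_alternatingClass (hsum : α + β = b) (hprod : α * β = 1)
    (hβ : |β| < 1) (hc : (b + 2) • c = 0) (hξ : ξ ∈ alternatingClass α β c) :
    limsupDist α ξ = ‖c‖ := by
  obtain ⟨η, hη⟩ := hξ
  have hdist (n : ℕ) :
      distNearestInt (ξ * α ^ n) = ‖c - ((η * (-β) ^ n : ℝ) : UnitAddCircle)‖ := by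
    have htrace := ((isAlternatingPair_pow_mul_iff hsum hprod hc n).mpr hη).1
    rw [AddCircle.coe_add, ← eq_sub_iff_add_eq] at htrace
    rw [distNearestInt_eq_norm, htrace]
    rcases n.even_or_odd with hn | hn
    · rw [hn.neg_one_pow, hn.neg_pow, one_smul]
    · rw [hn.neg_one_pow, hn.neg_pow, neg_one_smul, mul_neg, AddCircle.coe_neg, ← norm_neg,
        neg_sub', neg_neg]
  have hpow : Tendsto (fun n : ℕ ↦ η * (-β) ^ n) atTop (𝓝 0) := by
    simpa using (tendsto_pow_atTop_nhds_zero_of_abs_lt_one (by rwa [abs_neg])).const_mul η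
  have hcoe : Tendsto (fun n : ℕ ↦ ((η * (-β) ^ n : ℝ) : UnitAddCircle)) atTop (𝓝 0) :=
    ((AddCircle.continuous_mk' 1).tendsto 0).comp hpow
  refine Tendsto.limsup_eq ?_
  simpa only [hdist, sub_zero] using (tendsto_const_nhds.sub hcoe).norm

end AlternatingPair

/-- The point `1 / (b + 2)` of the unit circle, whose multiples are the possible traces `c`. -/
noncomputable def unitTrace (b : ℤ) : UnitAddCircle := ((1 / (b + 2) : ℝ) : UnitAddCircle)

section UnitTrace

variable {b : ℤ}

theorem add_two_smul_unitTrace (hb : b + 2 ≠ 0) : (b + 2) • unitTrace b = 0 := by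
  have hb' : (b + 2 : ℝ) ≠ 0 := by exact_mod_cast hb
  rw [unitTrace, ← AddCircle.coe_zsmul, zsmul_eq_mul]
  push_cast
  rw [mul_one_div_cancel hb']
  exact AddCircle.coe_period 1

theorem norm_unitTrace (hb : 0 ≤ b) : ‖unitTrace b‖ = 1 / (2 + b) := by
  have hb' : (0 : ℝ) ≤ b := by exact_mod_cast hb
  have habs : |1 / (b + 2 : ℝ)| = 1 / (2 + b) := by rw [abs_of_pos (by positivity), add_comm]
  rw [unitTrace, ← habs, AddCircle.norm_coe_eq_abs_iff 1 one_ne_zero, habs, abs_one]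
  gcongr
  linarith

end UnitTrace

section Identification

variable {b : ℤ} {α β ξ : ℝ}

theorem limsupDist_eq_zero_of_mem (hsum : α + β = b) (hprod : α * β = 1) (hβ : |β| < 1)
    (hξ : ξ ∈ alternatingClass α β 0) : limsupDist α ξ = 0 :=
  (limsupDist_eq_norm_of_mem_alternatingClass hsum hprod hβ (smul_zero _) hξ).trans norm_zero

theorem limsupDist_eq_one_div_of_mem (hsum : α + β = b) (hprod : α * β = 1)
    (hβ : |β| < 1) (hb : 0 ≤ b)
    (hξ : ξ ∈ alternatingClass α β (unitTrace b) ∪ alternatingClass α β (-unitTrace b)) :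
    limsupDist α ξ = 1 / (2 + b) := by
  have htorsion : (b + 2) • unitTrace b = 0 := add_two_smul_unitTrace (by lia)
  rw [← norm_unitTrace hb]
  rcases hξ with hξ | hξ
  · exact limsupDist_eq_norm_of_mem_alternatingClass hsum hprod hβ htorsion hξ
  · rw [← norm_neg]
    exact limsupDist_eq_norm_of_mem_alternatingClass hsum hprod hβ
      (by rw [smul_neg, htorsion, neg_zero]) hξ

theorem mem_alternatingClass_zero_iff (hsum : α + β = b) (hprod : α * β = 1) (hne : α ≠ β) :
    ξ ∈ alternatingClass α β 0 ↔
      ∃ y ∈ Algebra.adjoin ℤ ({α} : Set ℝ), ξ = 1 / (α - β) * y := by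
  have hsq : α ^ 2 = algebraMap ℤ ℝ (-1) + algebraMap ℤ ℝ b * α := by
    simp only [algebraMap_int_eq, eq_intCast, ← hsum]
    push_cast
    linear_combination -hprod
  have hdiff : α - β ≠ 0 := sub_ne_zero.mpr hne
  simp only [mem_adjoin_singleton_iff_of_sq_eq hsq, algebraMap_int_eq, eq_intCast]
  constructor
  · rintro ⟨η, h₀, h₁⟩
    rw [AddCircle.coe_eq_zero_iff] at h₀
    rw [neg_zero, AddCircle.coe_eq_zero_iff] at h₁
    obtain ⟨m, hm⟩ := h₀
    obtain ⟨k, hk⟩ := h₁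
    rw [zsmul_eq_mul, mul_one] at hm hk
    refine ⟨_, ⟨k - b * m, m, rfl⟩, ?_⟩
    rw [one_div_mul_eq_div, eq_div_iff hdiff]
    push_cast
    rw [hm, hk, ← hsum]
    ring
  · rintro ⟨_, ⟨p, q, rfl⟩, rfl⟩
    refine ⟨-(1 / (α - β) * (p + q * β)), ?_, ?_⟩
    · rw [← unitAddCircle_coe_intCast q]
      congr 1
      field_simp
      ring
    · rw [neg_zero, ← unitAddCircle_coe_intCast (p + q * b)]
      congr 1
      push_cast
      rw [← hsum]
      field_simp
      ring

theorem isAlternatingPair_unitTrace (hsum : α + β = b) (hprod : α * β = 1)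
    (hb : (b : ℝ) ^ 2 - 4 ≠ 0) :
    IsAlternatingPair α β (unitTrace b) ((α - 1) / (b ^ 2 - 4)) ((β - 1) / (b ^ 2 - 4)) := by
  have hb' : (b + 2 : ℝ) ≠ 0 := fun h ↦ hb (by linear_combination (b - 2 : ℝ) * h)
  constructor
  · rw [unitTrace]
    congr 1
    rw [← add_div, div_eq_div_iff hb hb']
    linear_combination (b + 2 : ℝ) * hsum
  · have htrace : (α - 1) / (b ^ 2 - 4) * α + (β - 1) / (b ^ 2 - 4) * β = 1 - 1 / (b + 2 : ℝ) := by
      field_simp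
      linear_combination (b + 2 : ℝ) * (α + β + b - 1) * hsum - 2 * (b + 2 : ℝ) * hprod
    rw [unitTrace, htrace, AddCircle.coe_sub, AddCircle.coe_period, zero_sub]

theorem mem_alternatingClass_unitTrace_union_neg_iff (hsum : α + β = b) (hprod : α * β = 1)
    (hb : (b : ℝ) ^ 2 - 4 ≠ 0) :
    ξ ∈ alternatingClass α β (unitTrace b) ∪ alternatingClass α β (-unitTrace b) ↔
      ∃ ε : ℝ, (ε = 1 ∨ ε = -1) ∧
        ∃ y ∈ alternatingClass α β 0, ξ = ε * ((α - 1) / (b ^ 2 - 4)) + y := by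
  have hθ := isAlternatingPair_unitTrace hsum hprod hb
  set θ := (α - 1) / ((b : ℝ) ^ 2 - 4)
  constructor
  · rintro (h | h)
    · refine ⟨1, .inl rfl, -θ + ξ, (add_mem_alternatingClass_add_iff hθ).mp ?_, by ring⟩
      rwa [add_neg_cancel_left, add_zero]
    · refine ⟨-1, .inr rfl, θ + ξ, (add_mem_alternatingClass_add_iff hθ.neg).mp ?_, by ring⟩
      rwa [neg_add_cancel_left, add_zero]
  · rintro ⟨_, rfl | rfl, y, hy, rfl⟩
    · left
      simpa using (add_mem_alternatingClass_add_iff hθ).mpr hy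
    · right
      simpa using (add_mem_alternatingClass_add_iff hθ.neg).mpr hy

end Identification

/-- The signed error `e n` made by rounding `ξ * α ^ n` to the nearest integer. -/
noncomputable def roundError (α ξ : ℝ) (n : ℕ) : ℝ := ξ * α ^ n - round (ξ * α ^ n)

/-- The integer `s n` by which the rounded values of `ξ * α ^ n` fail the recurrence
`x (n + 2) = b * x (n + 1) - x n`. -/
noncomputable def roundDefect (b : ℤ) (α ξ : ℝ) (n : ℕ) : ℤ :=
  round (ξ * α ^ (n + 2)) - b * round (ξ * α ^ (n + 1)) + round (ξ * α ^ n)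

section Rounding

variable {b : ℤ} {α β ξ : ℝ}

theorem roundDefect_eq (hsum : α + β = b) (hprod : α * β = 1) (n : ℕ) :
    (roundDefect b α ξ n : ℝ) =
      b * roundError α ξ (n + 1) - roundError α ξ n - roundError α ξ (n + 2) := by
  simp only [roundDefect, roundError]
  push_cast
  rw [← hsum]
  linear_combination (-(ξ * α ^ n)) * hprod

theorem eventually_abs_roundError_lt {d : ℝ} (h : limsupDist α ξ < d) :
    ∀ᶠ n in atTop, |roundError α ξ n| < d :=
  eventually_lt_of_limsup_lt h (isBoundedUnder_of ⟨1 / 2, fun _ ↦ abs_sub_round _⟩)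

theorem exists_roundDefect_alternating (hsum : α + β = b) (hprod : α * β = 1) (hb : 1 ≤ b)
    (h : limsupDist α ξ < 1 / (b + 1)) :
    ∃ M, |roundDefect b α ξ M| ≤ 1 ∧
      ∀ k, roundDefect b α ξ (M + k) = (-1) ^ k * roundDefect b α ξ M := by
  have hb' : (1 : ℝ) ≤ b := by exact_mod_cast hb
  obtain ⟨N, hN⟩ := eventually_atTop.mp (eventually_abs_roundError_lt h)
  have hle (n : ℕ) (hn : n ≥ N) : |roundDefect b α ξ n| ≤ 1 := by
    have : |(roundDefect b α ξ n : ℝ)| < 2 := by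
      rw [roundDefect_eq hsum hprod]
      exact abs_defect_lt_two (by linarith) (hN n hn) (hN (n + 1) (by lia))
        (hN (n + 2) (by lia))
    exact Int.lt_add_one_iff.mp (by exact_mod_cast this)
  have hlt (n : ℕ) (hn : n ≥ N) : |b * roundDefect b α ξ n + roundDefect b α ξ (n + 1)| < b := by
    have : |b * (roundDefect b α ξ n : ℝ) + roundDefect b α ξ (n + 1)| < b := by
      rw [roundDefect_eq hsum hprod, roundDefect_eq hsum hprod]
      exact abs_mul_defect_add_defect_lt hb' (hN n hn) (hN (n + 1) (by lia)) (hN (n + 3) (by lia))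
    exact_mod_cast this
  obtain ⟨M, hMN, hM⟩ := exists_alternating_tail fun n hn ↦
    eq_neg_of_abs_mul_add_lt (hle n hn) (hle (n + 1) (by lia)) (hlt n hn)
  exact ⟨M, hle M hMN, hM⟩

theorem roundError_succ_of_roundDefect_alternating (hsum : α + β = b) (hprod : α * β = 1)
    (hα : 1 < |α|) {c : ℝ} {M : ℕ}
    (hM : ∀ k, (roundDefect b α ξ (M + k) : ℝ) = (-1) ^ k * ((b + 2) * c)) :
    roundError α ξ (M + 1) - c = β * (roundError α ξ M + c) := by
  -- `-(-1) ^ k * c` has the same defect as `roundError`, so `x` solves the homogeneous recurrence.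
  let x : ℕ → ℝ := fun k ↦ roundError α ξ (M + k) + (-1) ^ k * c
  have hrec (k : ℕ) : x (k + 2) = (α + β) * x (k + 1) - α * β * x k := by
    have hdefect := (roundDefect_eq hsum hprod (M + k)).symm.trans (hM k)
    simp only [x, hsum, hprod, ← add_assoc]
    linear_combination -hdefect
  have hbound (k : ℕ) : ‖x k‖ ≤ 1 / 2 + |c| :=
    calc ‖x k‖ ≤ |roundError α ξ (M + k)| + |(-1) ^ k * c| := abs_add_le _ _
      _ ≤ 1 / 2 + |c| := by
        rw [abs_mul, abs_neg_one_pow, one_mul]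
        gcongr
        exact abs_sub_round _
  simpa [x, ← sub_eq_add_neg] using eq_mul_of_bounded_of_recurrence hα hbound hrec 0

theorem mul_pow_mem_alternatingClass_of_roundDefect (hsum : α + β = b) (hprod : α * β = 1)
    (hα : 1 < |α|) {c : ℝ} {M : ℕ}
    (hM : ∀ k, (roundDefect b α ξ (M + k) : ℝ) = (-1) ^ k * ((b + 2) * c)) :
    ξ * α ^ M ∈ alternatingClass α β (-c : ℝ) := by
  have hsucc := roundError_succ_of_roundDefect_alternating hsum hprod hα hM
  refine ⟨-(roundError α ξ M + c), ?_, ?_⟩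
  · rw [← sub_eq_zero, ← AddCircle.coe_sub, ← unitAddCircle_coe_intCast (round (ξ * α ^ M)),
      roundError]
    congr 1
    ring
  · rw [← sub_eq_zero, ← AddCircle.coe_neg, ← AddCircle.coe_sub, neg_mul, mul_comm _ β, ← hsucc,
      ← unitAddCircle_coe_intCast (round (ξ * α ^ (M + 1))), roundError]
    congr 1
    ring

theorem mem_alternatingClass_of_limsupDist_lt (hsum : α + β = b) (hprod : α * β = 1)
    (hα : 1 < |α|) (hb : 1 ≤ b) (h : limsupDist α ξ < 1 / (b + 1)) :
    ξ ∈ alternatingClass α β 0 ∨ ξ ∈ alternatingClass α β (unitTrace b) ∨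
      ξ ∈ alternatingClass α β (-unitTrace b) := by
  obtain ⟨M, ht, hM⟩ := exists_roundDefect_alternating hsum hprod hb h
  set t := roundDefect b α ξ M
  have hcoe : ((-(t * (1 / (b + 2))) : ℝ) : UnitAddCircle) = -t • unitTrace b := by
    rw [unitTrace, ← AddCircle.coe_zsmul, zsmul_eq_mul, Int.cast_neg, neg_mul]
  have hmem : ξ * α ^ M ∈ alternatingClass α β (-t • unitTrace b) := by
    refine hcoe ▸ mul_pow_mem_alternatingClass_of_roundDefect hsum hprod hα fun k ↦ ?_
    have hb' : (b + 2 : ℝ) ≠ 0 := by exact_mod_cast (by lia : b + 2 ≠ 0)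
    rw [hM]
    push_cast
    field_simp
  have htorsion : (b + 2) • (-t • unitTrace b) = 0 := by
    rw [smul_comm, add_two_smul_unitTrace (by lia), smul_zero]
  have hξ := mem_alternatingClass_of_mul_pow_mem hsum hprod htorsion hmem
  rw [smul_smul] at hξ
  have hle : |(-1) ^ M * -t| ≤ 1 := by
    rwa [abs_mul, abs_neg_one_pow, one_mul, abs_neg]
  obtain h | h | h := Int.abs_le_one_iff.mp hle
  · exact .inl (by simpa [h] using hξ)
  · exact .inr (.inl (by simpa [h] using hξ))
  · exact .inr (.inr (by simpa [h] using hξ))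

end Rounding

theorem one_lt_and_add_inv_eq_of_eq_half_add_sqrt {b α : ℝ} (hb : 2 < b)
    (hα : α = (b + √(b ^ 2 - 4)) / 2) : 1 < α ∧ α + 1 / α = b := by
  have hdiscr : 0 < b ^ 2 - 4 := by nlinarith
  have hα₁ : 1 < α := by linarith [Real.sqrt_pos.mpr hdiscr]
  have hroot : α ^ 2 + 1 = α * b := by
    rw [hα]
    linear_combination Real.sq_sqrt hdiscr.le / 4
  refine ⟨hα₁, ?_⟩
  field_simp
  exact hroot

theorem stmt5_general (b : ℤ) (hb : 3 ≤ b) (α α₂ : ℝ)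
    (hα : α = ((b : ℝ) + Real.sqrt ((b : ℝ) ^ 2 - 4)) / 2) (hα₂ : α₂ = 1 / α)
    (X₀ X₁ : Set ℝ)
    (hX₀ : X₀ = {x : ℝ | ∃ y ∈ Algebra.adjoin ℤ ({α} : Set ℝ), x = (1 / (α - α₂)) * y})
    (hX₁ : X₁ = {x : ℝ | ∃ ε : ℝ, (ε = 1 ∨ ε = -1) ∧
      ∃ y ∈ X₀, x = ε * ((α - 1) / ((b : ℝ) ^ 2 - 4)) + y}) :
    ({ξ : ℝ | limsupDist α ξ = 0} = X₀) ∧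
    ({ξ : ℝ | limsupDist α ξ = 1 / (2 + (b : ℝ))} = X₁) ∧
    (∀ ξ : ℝ, ξ ∉ X₀ → 1 / (2 + (b : ℝ)) ≤ limsupDist α ξ) ∧
    (∀ ξ : ℝ, ξ ∉ X₀ ∪ X₁ → 1 / (1 + (b : ℝ)) ≤ limsupDist α ξ) := by
  have hb' : (3 : ℝ) ≤ b := by exact_mod_cast hb
  obtain ⟨hα₁, hsum⟩ := one_lt_and_add_inv_eq_of_eq_half_add_sqrt (by linarith) hα
  rw [← hα₂] at hsum
  have hprod : α * α₂ = 1 := by rw [hα₂, mul_one_div_cancel (by positivity)]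
  have hβ : |α₂| < 1 := by
    rw [hα₂, abs_of_pos (by positivity)]
    exact (div_lt_one (by positivity)).mpr hα₁
  have hclass₀ : X₀ = alternatingClass α α₂ 0 :=
    hX₀.trans <| Set.ext fun _ ↦ (mem_alternatingClass_zero_iff hsum hprod
      ((le_abs_self _).trans_lt (hβ.trans hα₁)).ne').symm
  have hclass₁ : X₁ = alternatingClass α α₂ (unitTrace b) ∪ alternatingClass α α₂ (-unitTrace b) :=
    hX₁.trans <| hclass₀ ▸ Set.ext fun _ ↦
      (mem_alternatingClass_unitTrace_union_neg_iff hsum hprod (by nlinarith)).symm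
  have hlim₀ : ∀ ξ ∈ X₀, limsupDist α ξ = 0 := fun _ hξ ↦
    limsupDist_eq_zero_of_mem hsum hprod hβ (hclass₀ ▸ hξ)
  have hlim₁ : ∀ ξ ∈ X₁, limsupDist α ξ = 1 / (2 + b) := fun _ hξ ↦
    limsupDist_eq_one_div_of_mem hsum hprod hβ (by lia) (hclass₁ ▸ hξ)
  have hgap : ∀ ξ, ξ ∉ X₀ ∪ X₁ → 1 / (1 + (b : ℝ)) ≤ limsupDist α ξ := by
    intro ξ hξ
    contrapose! hξ
    rw [hclass₀, hclass₁]
    exact mem_alternatingClass_of_limsupDist_lt hsum hprod (hα₁.trans_le (le_abs_self _)) (by lia)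
      (by rwa [add_comm])
  have hpos : (0 : ℝ) < 1 / (2 + b) := by positivity
  have hlt : 1 / (2 + b : ℝ) < 1 / (1 + b) := by gcongr; norm_num
  exact ⟨setOf_eq_of_gap_left hpos hlt.le hlim₀ hlim₁ hgap,
    setOf_eq_of_gap_right hpos.ne hlt hlim₀ hlim₁ hgap,
    fun _ ↦ le_of_notMem_of_gap hlt.le hlim₁ hgap, hgap⟩

theorem stmt5 (b : ℤ) (hb : 4 ≤ b) (α α₂ : ℝ)
    (hα : α = ((b : ℝ) + Real.sqrt ((b : ℝ) ^ 2 - 4)) / 2) (hα₂ : α₂ = 1 / α)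
    (X₀ X₁ : Set ℝ)
    (hX₀ : X₀ = {x : ℝ | ∃ y ∈ Algebra.adjoin ℤ ({α} : Set ℝ), x = (1 / (α - α₂)) * y})
    (hX₁ : X₁ = {x : ℝ | ∃ ε : ℝ, (ε = 1 ∨ ε = -1) ∧
      ∃ y ∈ X₀, x = ε * ((α - 1) / ((b : ℝ) ^ 2 - 4)) + y}) :
    ({ξ : ℝ | limsupDist α ξ = 0} = X₀) ∧
    ({ξ : ℝ | limsupDist α ξ = 1 / (2 + (b : ℝ))} = X₁) ∧
    (∀ ξ : ℝ, ξ ∉ X₀ → 1 / (2 + (b : ℝ)) ≤ limsupDist α ξ) ∧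
    (∀ ξ : ℝ, ξ ∉ X₀ ∪ X₁ → 1 / (1 + (b : ℝ)) ≤ limsupDist α ξ) :=
  stmt5_general b (by lia) α α₂ hα hα₂ X₀ X₁ hX₀ hX₁
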